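/- Stabilization of Betti numbers: fix integers 0 ≤ q < d. Let X and Y be cubical sets in ℝ^d whose symmetric difference X △ Y is a bounded set. Then there exists a constant Δ_∞ ∈ ℤ such that, for every sequence of boxes A_n = x_n + Λ_{m_n} (x_n ∈ ℤ^d, m_n ∈ ℕ) with liminf A_n = ℝ^d (i.e. every bounded subset of ℝ^d is contained in A_n for all sufficiently large n), there exists n_∞ ∈ ℕ with β_q(X ∩ A_n) − β_q(Y ∩ A_n) = Δ_∞ for all n ≥ n_∞. -/

import Mathlib

open MeasureTheory Filter Topology

noncomputable section

/-- An elementary cube in `ℝ^d`: the `i`-th component is the elementary interval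
`[l, l+1]` if the Boolean is `true` (nondegenerate) and `[l, l]` if `false` (degenerate). -/
abbrev ElemCube (d : ℕ) := Fin d → ℤ × Bool

/-- The dimension of an elementary cube: the number of nondegenerate components. -/
def cubeDim {d : ℕ} (Q : ElemCube d) : ℕ :=
  (Finset.univ.filter fun i => (Q i).2 = true).card

/-- The geometric realization of an elementary cube as a subset of `ℝ^d`. -/
def cubeSet {d : ℕ} (Q : ElemCube d) : Set (Fin d → ℝ) :=
  {x | ∀ i, x i ∈ Set.Icc ((Q i).1 : ℝ) ((Q i).1 + (if (Q i).2 then 1 else 0))}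

/-- A cubical set is a union of elementary cubes. -/
def IsCubical {d : ℕ} (X : Set (Fin d → ℝ)) : Prop :=
  ∃ S : Set (ElemCube d), X = ⋃ Q ∈ S, cubeSet Q

/-- The free `ℤ`-module generated by all elementary cubes of `ℝ^d` (all dimensions mixed). -/
abbrev CubChain (d : ℕ) := ElemCube d →₀ ℤ

/-- The cubical boundary of a single elementary cube, defined by induction on the ambient
dimension, following the inductive definition: in `ℝ¹`, `∂ [l,l+1]^ = [l+1]^ - [l]^` and
`∂ Q̂ = 0` for degenerate `Q`; and for `Q = I × P`,
`∂ Q̂ = (∂ Î) ⋄ P̂ + (-1)^(dim I) Î ⋄ (∂ P̂)`, where `⋄` is the cubical product. -/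
def boundaryCube : (d : ℕ) → ElemCube d → CubChain d
  | 0, _ => 0
  | d + 1, Q =>
      (if (Q 0).2 then
          Finsupp.single (Fin.cons ((Q 0).1 + 1, false) (fun i => Q i.succ)) (1 : ℤ)
            - Finsupp.single (Fin.cons ((Q 0).1, false) (fun i => Q i.succ)) (1 : ℤ)
        else 0)
      + (if (Q 0).2 then (-1 : ℤ) else 1) •
          (boundaryCube d (fun i => Q i.succ)).sum
            (fun R n => Finsupp.single (Fin.cons (Q 0) R) n)

/-- The cubical boundary operator, the `ℤ`-linear extension of `boundaryCube`. -/
def boundaryHom (d : ℕ) : CubChain d →ₗ[ℤ] CubChain d :=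
  Finsupp.lsum ℤ fun Q => LinearMap.toSpanSingleton ℤ (CubChain d) (boundaryCube d Q)

/-- `C_k^d(X)`: the submodule of chains supported on the `k`-dimensional elementary cubes
contained in `X`. -/
def chainsOn (d k : ℕ) (X : Set (Fin d → ℝ)) : Submodule ℤ (CubChain d) :=
  Finsupp.supported ℤ ℤ {Q : ElemCube d | cubeDim Q = k ∧ cubeSet Q ⊆ X}

/-- `Z_q(X) = ker ∂_q^X`, the cycles of the cubical set `X` in degree `q`. -/
def cycleMod (d q : ℕ) (X : Set (Fin d → ℝ)) : Submodule ℤ (CubChain d) :=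
  chainsOn d q X ⊓ LinearMap.ker (boundaryHom d)

/-- `B_q(X) = im ∂_{q+1}^X`, the boundaries of the cubical set `X` in degree `q`. -/
def boundaryMod (d q : ℕ) (X : Set (Fin d → ℝ)) : Submodule ℤ (CubChain d) :=
  Submodule.map (boundaryHom d) (chainsOn d (q + 1) X)

/-- The `q`-th Betti number of a cubical set: the rank of the free part of the `q`-th
cubical homology `H_q(X) = Z_q(X) / B_q(X)`. -/
def betti (d q : ℕ) (X : Set (Fin d → ℝ)) : ℕ :=
  Module.finrank ℤ
    (↥(cycleMod d q X) ⧸ (boundaryMod d q X).comap (cycleMod d q X).subtype)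

/-- `Λ_n = [-n, n]^d ⊆ ℝ^d`. -/
def lambda (d n : ℕ) : Set (Fin d → ℝ) := {x | ∀ i, x i ∈ Set.Icc (-(n : ℝ)) n}

/-- The box `x + Λ_m = x + [-m, m]^d ⊆ ℝ^d`, for `x ∈ ℤ^d`. -/
def xbox {d : ℕ} (x : Fin d → ℤ) (m : ℕ) : Set (Fin d → ℝ) :=
  {y | ∀ i, y i ∈ Set.Icc ((x i : ℝ) - m) ((x i : ℝ) + m)}

theorem lowerCube_dim_cons {d : ℕ} (a : ℤ × Bool) (R : ElemCube d) :
    cubeDim (Fin.cons a R : ElemCube (d + 1)) = (if a.2 then 1 else 0) + cubeDim R := by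
  unfold cubeDim
  rw [Finset.card_filter, Finset.card_filter, Fin.sum_univ_succ]
  simp

theorem cubeSet_cons_subset {d : ℕ} (a b : ℤ × Bool) (R P : ElemCube d)
    (hR : cubeSet R ⊆ cubeSet P)
    (hab : Set.Icc (a.1 : ℝ) (a.1 + (if a.2 then 1 else 0))
      ⊆ Set.Icc (b.1 : ℝ) (b.1 + (if b.2 then 1 else 0))) :
    cubeSet (Fin.cons a R : ElemCube (d + 1)) ⊆ cubeSet (Fin.cons b P : ElemCube (d + 1)) := by
  intro x hx i
  refine Fin.cases ?_ (fun j => ?_) i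
  · have := hx 0
    simp only [Fin.cons_zero] at this ⊢
    exact hab this
  · have h : (fun i => x (Fin.succ i)) ∈ cubeSet R := fun i => by
      have := hx i.succ
      simpa only [Fin.cons_succ] using this
    have := hR h j
    simpa only [Fin.cons_succ] using this

def consChain {d : ℕ} (a : ℤ × Bool) : CubChain d →ₗ[ℤ] CubChain (d + 1) :=
  Finsupp.lmapDomain ℤ ℤ (fun R => (Fin.cons a R : ElemCube (d + 1)))

theorem consChain_single {d : ℕ} (a : ℤ × Bool) (R : ElemCube d) (n : ℤ) :
    consChain a (Finsupp.single R n) = Finsupp.single (Fin.cons a R : ElemCube (d + 1)) n := by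
  simp [consChain, Finsupp.mapDomain_single]

theorem boundaryHom_single (d : ℕ) (Q : ElemCube d) :
    boundaryHom d (Finsupp.single Q 1) = boundaryCube d Q := by
  simp [boundaryHom]

theorem boundaryCube_cons (d : ℕ) (a : ℤ × Bool) (R : ElemCube d) :
    boundaryCube (d + 1) (Fin.cons a R) =
      (if a.2 then consChain (a.1 + 1, false) (Finsupp.single R 1)
        - consChain (a.1, false) (Finsupp.single R 1) else 0)
      + (if a.2 then (-1 : ℤ) else 1) • consChain a (boundaryCube d R) := by
  simp only [consChain_single]
  rw [boundaryCube]
  simp only [Fin.cons_zero, Fin.cons_succ]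
  rfl

theorem boundaryHom_consChain (d : ℕ) (a : ℤ × Bool) (c : CubChain d) :
    boundaryHom (d + 1) (consChain a c) =
      (if a.2 then consChain (a.1 + 1, false) c - consChain (a.1, false) c else 0)
      + (if a.2 then (-1 : ℤ) else 1) • consChain a (boundaryHom d c) := by
  induction c using Finsupp.induction_linear with
  | zero => simp
  | add f g hf hg =>
    simp only [map_add, hf, hg]
    split_ifs <;> module
  | single R n =>
    have h1 : (Finsupp.single R n : CubChain d) = n • Finsupp.single R 1 := by simp
    rw [h1]
    simp only [map_smul]
    rw [consChain_single, boundaryHom_single, boundaryCube_cons, boundaryHom_single]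
    split_ifs <;> module

theorem boundaryHom_boundaryCube : ∀ (d : ℕ) (Q : ElemCube d),
    boundaryHom d (boundaryCube d Q) = 0 := by
  intro d
  induction d with
  | zero => intro Q; simp [boundaryCube]
  | succ d ih =>
    intro Q
    rw [← Fin.cons_self_tail Q, boundaryCube_cons]
    generalize Fin.tail Q = R
    generalize Q 0 = a
    obtain ⟨l, b⟩ := a
    cases b
    · simp [boundaryHom_consChain, ih]
    · simp [boundaryHom_consChain, ih, boundaryHom_single]

theorem boundaryHom_comp (d : ℕ) (c : CubChain d) : boundaryHom d (boundaryHom d c) = 0 := by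
  induction c using Finsupp.induction_linear with
  | zero => simp
  | add f g hf hg => simp [hf, hg]
  | single R n =>
    have h1 : (Finsupp.single R n : CubChain d) = n • Finsupp.single R 1 := by simp
    rw [h1, map_smul, map_smul, boundaryHom_single, boundaryHom_boundaryCube, smul_zero]

theorem consChain_mem {d k j : ℕ} (a b : ℤ × Bool) (P : ElemCube d)
    (hab : Set.Icc (a.1 : ℝ) (a.1 + (if a.2 then 1 else 0))
      ⊆ Set.Icc (b.1 : ℝ) (b.1 + (if b.2 then 1 else 0)))
    (hk : (if a.2 then 1 else 0) + k = j)
    (c : CubChain d) (hc : c ∈ chainsOn d k (cubeSet P)) :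
    consChain a c ∈ chainsOn (d + 1) j (cubeSet (Fin.cons b P : ElemCube (d + 1))) := by
  classical
  unfold chainsOn at *
  rw [Finsupp.mem_supported] at *
  intro Q hQ
  have h := Finsupp.mapDomain_support (f := fun R => (Fin.cons a R : ElemCube (d + 1))) hQ
  rw [Finset.mem_image] at h
  obtain ⟨R, hR, rfl⟩ := h
  have h2 := hc hR
  refine ⟨?_, cubeSet_cons_subset a b R P h2.2 hab⟩
  rw [lowerCube_dim_cons, h2.1, hk]

theorem boundaryCube_zero_dim : ∀ (d : ℕ) (Q : ElemCube d), cubeDim Q = 0 →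
    boundaryCube d Q = 0 := by
  intro d
  induction d with
  | zero => intro Q _; rfl
  | succ d ih =>
    intro Q
    rw [← Fin.cons_self_tail Q, boundaryCube_cons, lowerCube_dim_cons]
    intro h
    have h1 : cubeDim (Fin.tail Q) = 0 := by omega
    have h2 : (Q 0).2 = false := by
      by_contra hc
      simp at hc
      simp [hc] at h
    simp [ih _ h1, h2]

theorem boundaryCube_mem : ∀ (d k : ℕ) (Q : ElemCube d), cubeDim Q = k + 1 →
    boundaryCube d Q ∈ chainsOn d k (cubeSet Q) := by
  intro d
  induction d with
  | zero => intro k Q _; simp [boundaryCube]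
  | succ d ih =>
    intro k Q
    rw [← Fin.cons_self_tail Q, boundaryCube_cons]
    generalize Fin.tail Q = R
    generalize Q 0 = a
    intro hdim
    rw [lowerCube_dim_cons] at hdim
    obtain ⟨l, b⟩ := a
    have hs : ∀ j, cubeDim R = j → (Finsupp.single R 1 : CubChain d) ∈ chainsOn d j (cubeSet R) := by
      intro j hj
      exact Finsupp.single_mem_supported ℤ _ ⟨hj, subset_rfl⟩
    cases b
    · simp only [Bool.false_eq_true, if_false, zero_add, one_smul] at hdim ⊢
      exact consChain_mem _ _ _ subset_rfl (by simp) _ (ih k R hdim)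
    · simp only [if_true] at hdim ⊢
      refine Submodule.add_mem _ (Submodule.sub_mem _ ?_ ?_) (Submodule.smul_mem _ _ ?_)
      · refine consChain_mem _ _ _ ?_ ?_ _ (hs k (by omega))
        · simp
        · simp
      · refine consChain_mem _ _ _ ?_ ?_ _ (hs k (by omega))
        · simp
        · simp
      · rcases k with _ | k
        · have : boundaryCube d R = 0 := by
            have h0 : cubeDim R = 0 := by omega
            clear hs hdim ih
            exact boundaryCube_zero_dim d R h0
          rw [this, map_zero]; exact Submodule.zero_mem _
        · exact consChain_mem _ _ _ subset_rfl (by simp; omega) _ (ih k R (by omega))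

theorem chainsOn_mono {d k : ℕ} {W V : Set (Fin d → ℝ)} (h : W ⊆ V) :
    chainsOn d k W ≤ chainsOn d k V :=
  Finsupp.supported_mono (fun _ hQ => ⟨hQ.1, hQ.2.trans h⟩)

theorem boundaryMod_le_cycleMod (d q : ℕ) (W : Set (Fin d → ℝ)) :
    boundaryMod d q W ≤ cycleMod d q W := by
  rintro _ ⟨c, hc, rfl⟩
  refine ⟨?_, boundaryHom_comp d c⟩
  have h : chainsOn d (q + 1) W ≤ (chainsOn d q W).comap (boundaryHom d) := by
    unfold chainsOn
    rw [Finsupp.supported_eq_span_single, Submodule.span_le]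
    rintro _ ⟨Q, hQ, rfl⟩
    rw [SetLike.mem_coe, Submodule.mem_comap, boundaryHom_single]
    exact chainsOn_mono hQ.2 (boundaryCube_mem d q Q hQ.1)
  exact h hc

theorem finite_cubes {d : ℕ} {W : Set (Fin d → ℝ)} (hW : Bornology.IsBounded W) :
    {Q : ElemCube d | cubeSet Q ⊆ W}.Finite := by
  obtain ⟨r, hr⟩ := hW.subset_closedBall 0
  refine Set.Finite.subset (Set.Finite.pi (t := fun _ : Fin d =>
    (Set.Icc (-⌈r⌉) ⌈r⌉) ×ˢ (Set.univ : Set Bool))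
    (fun _ => (Set.finite_Icc _ _).prod Set.finite_univ)) ?_
  intro Q hQ i _
  have h1 : (fun i => ((Q i).1 : ℝ)) ∈ cubeSet Q := by
    intro i
    refine ⟨le_rfl, ?_⟩
    split_ifs <;> simp
  have h2 := hr (hQ h1)
  rw [mem_closedBall_zero_iff] at h2
  have h3 := (norm_le_pi_norm (fun i => ((Q i).1 : ℝ)) i).trans h2
  rw [Real.norm_eq_abs, abs_le] at h3
  have h4 := Int.le_ceil r
  refine ⟨⟨?_, ?_⟩, trivial⟩
  · have : (-⌈r⌉ : ℝ) ≤ (Q i).1 := by linarith [h3.1]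
    exact_mod_cast this
  · have : ((Q i).1 : ℝ) ≤ ⌈r⌉ := by linarith [h3.2]
    exact_mod_cast this

theorem finite_supported {d : ℕ} {S : Set (ElemCube d)} (hS : S.Finite) :
    Module.Finite ℤ (Finsupp.supported ℤ ℤ S) := by
  rw [Finsupp.supported_eq_span_single]
  exact Module.Finite.span_of_finite ℤ (hS.image _)

theorem finite_chainsOn {d k : ℕ} {W : Set (Fin d → ℝ)} (hW : Bornology.IsBounded W) :
    Module.Finite ℤ (chainsOn d k W) :=
  finite_supported ((finite_cubes hW).subset fun _ hQ => hQ.2)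

theorem betti_formula {d q : ℕ} {W : Set (Fin d → ℝ)} (hW : Bornology.IsBounded W) :
    betti d q W + Module.finrank ℤ ((chainsOn d (q + 1) W).map (boundaryHom d))
      + Module.finrank ℤ ((chainsOn d q W).map (boundaryHom d))
      = Module.finrank ℤ ((chainsOn d q W).map LinearMap.id) := by
  have := finite_chainsOn (k := q) hW
  have hZ : Module.Finite ℤ (cycleMod d q W) :=
    Module.Finite.of_injective (Submodule.inclusion (inf_le_left : cycleMod d q W ≤ chainsOn d q W))
      (Submodule.inclusion_injective _)
  have h1 := Submodule.finrank_quotient_add_finrank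
    ((boundaryMod d q W).comap (cycleMod d q W).subtype)
  rw [(Submodule.comapSubtypeEquivOfLe (boundaryMod_le_cycleMod d q W)).finrank_eq] at h1
  have h2 := (LinearMap.ker ((boundaryHom d).domRestrict
    (chainsOn d q W))).finrank_quotient_add_finrank
  rw [((boundaryHom d).domRestrict (chainsOn d q W)).quotKerEquivRange.finrank_eq,
    LinearMap.range_domRestrict, LinearMap.ker_domRestrict,
    (Submodule.equivSubtypeMap _ _).finrank_eq, Submodule.map_comap_subtype] at h2
  rw [Submodule.map_id, ← h2]
  unfold betti
  change _ = _ + Module.finrank ℤ (cycleMod d q W)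
  rw [← h1]
  change _ + Module.finrank ℤ (boundaryMod d q W) + _ = _
  omega

theorem finrank_sup_le_of_le {d : ℕ}
    (M M' N : Submodule ℤ (CubChain d)) (h : M ≤ M') [Module.Finite ℤ M'] [Module.Finite ℤ N] :
    Module.finrank ℤ (M' ⊔ N : Submodule ℤ (CubChain d)) + Module.finrank ℤ M
      ≤ Module.finrank ℤ (M ⊔ N : Submodule ℤ (CubChain d)) + Module.finrank ℤ M' := by
  have hM : Module.Finite ℤ M :=
    Module.Finite.of_injective (Submodule.inclusion h) (Submodule.inclusion_injective _)
  have e1 : M' ⊔ (M ⊔ N) = M' ⊔ N := by rw [← sup_assoc, sup_eq_left.2 h]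
  have hi : Module.Finite ℤ (M' ⊓ (M ⊔ N) : Submodule ℤ (CubChain d)) :=
    Module.Finite.of_injective (Submodule.inclusion (inf_le_left : M' ⊓ (M ⊔ N) ≤ M'))
      (Submodule.inclusion_injective (inf_le_left : M' ⊓ (M ⊔ N) ≤ M'))
  have h1 := Submodule.rank_sup_add_rank_inf_eq M' (M ⊔ N)
  rw [e1, ← Module.finrank_eq_rank, ← Module.finrank_eq_rank, ← Module.finrank_eq_rank,
    ← Module.finrank_eq_rank] at h1
  have h2 : Module.finrank ℤ (M' ⊔ N : Submodule ℤ (CubChain d))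
      + Module.finrank ℤ (M' ⊓ (M ⊔ N) : Submodule ℤ (CubChain d))
      = Module.finrank ℤ M' + Module.finrank ℤ (M ⊔ N : Submodule ℤ (CubChain d)) := by exact_mod_cast h1
  have h3 : Module.finrank ℤ M ≤ Module.finrank ℤ (M' ⊓ (M ⊔ N) : Submodule ℤ (CubChain d)) :=
    Submodule.finrank_mono (le_inf h le_sup_left)
  omega

theorem dist_cube_le {d : ℕ} (Q : ElemCube d) {x y : Fin d → ℝ}
    (hx : x ∈ cubeSet Q) (hy : y ∈ cubeSet Q) : dist x y ≤ 1 := by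
  rw [dist_pi_le_iff zero_le_one]
  intro i
  have h1 := hx i
  have h2 := hy i
  rw [Real.dist_eq, abs_le]
  have : (if (Q i).2 then (1 : ℝ) else 0) ≤ 1 := by split_ifs <;> norm_num
  constructor <;> linarith [h1.1, h1.2, h2.1, h2.2]

theorem stab_rank {d k : ℕ} (f : CubChain d →ₗ[ℤ] CubChain d) {X Y : Set (Fin d → ℝ)}
    (hYX : Y ⊆ X) (hb : Bornology.IsBounded (X \ Y)) :
    ∃ (D : ℤ) (S : Set (Fin d → ℝ)), Bornology.IsBounded S ∧
      ∀ B, Bornology.IsBounded B → S ⊆ B →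
        (Module.finrank ℤ ((chainsOn d k (X ∩ B)).map f) : ℤ)
          - Module.finrank ℤ ((chainsOn d k (Y ∩ B)).map f) = D := by
  set F : Set (ElemCube d) := {Q | cubeDim Q = k ∧ cubeSet Q ⊆ X ∧ ¬ cubeSet Q ⊆ Y} with hF
  set T : Set (Fin d → ℝ) := Metric.cthickening 1 (X \ Y) with hT
  have hTb : Bornology.IsBounded T := hb.cthickening
  have hFT : ∀ Q ∈ F, cubeSet Q ⊆ T := by
    rintro Q ⟨_, h1, h2⟩ x hx
    obtain ⟨y, hy, hyY⟩ := Set.not_subset.1 h2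
    exact Metric.mem_cthickening_of_dist_le x y 1 _ ⟨h1 hy, hyY⟩ (dist_cube_le Q hx hy)
  have hFf : F.Finite := (finite_cubes hTb).subset hFT
  have hFfin := finite_supported hFf
  set N := (Finsupp.supported ℤ ℤ F).map f with hN
  have key : ∀ B, T ⊆ B → (chainsOn d k (X ∩ B)).map f = (chainsOn d k (Y ∩ B)).map f ⊔ N := by
    intro B hB
    rw [hN, ← Submodule.map_sup]
    unfold chainsOn
    rw [← Finsupp.supported_union]
    congr 2
    ext Q
    constructor
    · rintro ⟨h1, h2⟩
      by_cases h : cubeSet Q ⊆ Y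
      · exact Or.inl ⟨h1, Set.subset_inter h (h2.trans Set.inter_subset_right)⟩
      · exact Or.inr ⟨h1, h2.trans Set.inter_subset_left, h⟩
    · rintro (⟨h1, h2⟩ | h)
      · exact ⟨h1, h2.trans (Set.inter_subset_inter_left _ hYX)⟩
      · exact ⟨h.1, Set.subset_inter h.2.1 ((hFT Q h).trans hB)⟩
  have hMf : ∀ B, Bornology.IsBounded B → Module.Finite ℤ ((chainsOn d k (Y ∩ B)).map f) := by
    intro B hB
    have := finite_chainsOn (k := k) (hB.subset (Set.inter_subset_right : Y ∩ B ⊆ B))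
    infer_instance
  have hle : ∀ B, Bornology.IsBounded B → Module.finrank ℤ ((chainsOn d k (Y ∩ B)).map f) ≤
      Module.finrank ℤ ((chainsOn d k (Y ∩ B)).map f ⊔ N : Submodule ℤ (CubChain d)) := by
    intro B hB
    have := hMf B hB
    exact Submodule.finrank_mono le_sup_left
  let P : ℕ → Prop := fun n => ∃ B, Bornology.IsBounded B ∧ T ⊆ B ∧
    Module.finrank ℤ ((chainsOn d k (Y ∩ B)).map f ⊔ N : Submodule ℤ (CubChain d))
      = Module.finrank ℤ ((chainsOn d k (Y ∩ B)).map f) + n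
  have hP : ∃ n, P n := by
    obtain ⟨n, hn⟩ := Nat.exists_eq_add_of_le (hle T hTb)
    exact ⟨n, T, hTb, subset_rfl, hn⟩
  classical
  obtain ⟨B0, hB0, hTB0, h0⟩ := Nat.find_spec hP
  refine ⟨(Nat.find hP : ℤ), B0, hB0, fun B hB hBB => ?_⟩
  rw [key B (hTB0.trans hBB)]
  obtain ⟨n, hn⟩ := Nat.exists_eq_add_of_le (hle B hB)
  have h1 : Nat.find hP ≤ n := Nat.find_min' hP ⟨B, hB, hTB0.trans hBB, hn⟩
  have := hMf B hB
  have h2 := finrank_sup_le_of_le ((chainsOn d k (Y ∩ B0)).map f) ((chainsOn d k (Y ∩ B)).map f) N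
    (Submodule.map_mono (chainsOn_mono (Set.inter_subset_inter_right _ hBB)))
  omega

theorem stab_betti {d q : ℕ} {X Y : Set (Fin d → ℝ)}
    (hYX : Y ⊆ X) (hb : Bornology.IsBounded (X \ Y)) :
    ∃ (D : ℤ) (S : Set (Fin d → ℝ)), Bornology.IsBounded S ∧
      ∀ B, Bornology.IsBounded B → S ⊆ B →
        (betti d q (X ∩ B) : ℤ) - betti d q (Y ∩ B) = D := by
  obtain ⟨D1, S1, hS1, h1⟩ := stab_rank (k := q) LinearMap.id hYX hb
  obtain ⟨D2, S2, hS2, h2⟩ := stab_rank (k := q) (boundaryHom d) hYX hb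
  obtain ⟨D3, S3, hS3, h3⟩ := stab_rank (k := q + 1) (boundaryHom d) hYX hb
  refine ⟨D1 - D2 - D3, S1 ∪ S2 ∪ S3, (hS1.union hS2).union hS3, fun B hB hSB => ?_⟩
  simp only [Set.union_subset_iff] at hSB
  have e1 := h1 B hB hSB.1.1
  have e2 := h2 B hB hSB.1.2
  have e3 := h3 B hB hSB.2
  have f1 := betti_formula (q := q) (hB.subset (Set.inter_subset_right : X ∩ B ⊆ B))
  have f2 := betti_formula (q := q) (hB.subset (Set.inter_subset_right : Y ∩ B ⊆ B))
  omega

theorem xbox_bounded {d : ℕ} (x : Fin d → ℤ) (m : ℕ) : Bornology.IsBounded (xbox x m) := by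
  refine (Metric.isBounded_Icc (fun i => (x i : ℝ) - m) (fun i => (x i : ℝ) + m)).subset ?_
  intro y hy
  exact ⟨fun i => (hy i).1, fun i => (hy i).2⟩

/-- **stabilization of Betti numbers.** Fix `0 ≤ q < d`. Let `X` and `Y` be
cubical sets in `ℝ^d` whose symmetric difference `X △ Y` is bounded. Then there is a constant
`Δ_∞ ∈ ℤ` such that, for every sequence of boxes `A_n = x_n + Λ_{m_n}` with
`liminf A_n = ℝ^d` (every bounded subset of `ℝ^d` is contained in `A_n` for all sufficiently
large `n`), one has `β_q(X ∩ A_n) - β_q(Y ∩ A_n) = Δ_∞` for all large enough `n`. -/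
theorem betti_stabilization (d q : ℕ) (hq : q < d)
    (X Y : Set (Fin d → ℝ)) (hX : IsCubical X) (hY : IsCubical Y)
    (hbdd : Bornology.IsBounded (symmDiff X Y)) :
    ∃ Δ : ℤ, ∀ (x : ℕ → Fin d → ℤ) (m : ℕ → ℕ),
      (∀ S : Set (Fin d → ℝ), Bornology.IsBounded S →
        ∀ᶠ n in atTop, S ⊆ xbox (x n) (m n)) →
      ∃ N : ℕ, ∀ n ≥ N,
        (betti d q (X ∩ xbox (x n) (m n)) : ℤ) - (betti d q (Y ∩ xbox (x n) (m n)) : ℤ)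
          = Δ := by
  have hb1 : Bornology.IsBounded (X \ (X ∩ Y)) := by
    refine hbdd.subset fun z hz => Or.inl ⟨hz.1, fun h => hz.2 ⟨hz.1, h⟩⟩
  have hb2 : Bornology.IsBounded (Y \ (X ∩ Y)) := by
    refine hbdd.subset fun z hz => Or.inr ⟨hz.1, fun h => hz.2 ⟨h, hz.1⟩⟩
  obtain ⟨D1, S1, hS1, h1⟩ := stab_betti (q := q) Set.inter_subset_left hb1
  obtain ⟨D2, S2, hS2, h2⟩ := stab_betti (q := q) Set.inter_subset_right hb2
  refine ⟨D1 - D2, fun x m hxm => ?_⟩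
  obtain ⟨N, hN⟩ := eventually_atTop.1 (hxm _ (hS1.union hS2))
  refine ⟨N, fun n hn => ?_⟩
  have hs := Set.union_subset_iff.1 (hN n hn)
  have e1 := h1 _ (xbox_bounded (x n) (m n)) hs.1
  have e2 := h2 _ (xbox_bounded (x n) (m n)) hs.2
  omega

end
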